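/- arXiv:1110.0104 — 2 statements merged into one kernel-verified Lean document; each statement's English description precedes it below -/
import Mathlib

section
/- Fix an integer j ≥ 1. In the quotient ℂ-vector space A/(z^j·O_U + z^{−j}·O_V), the images of the monomials z^l u^i with 0 ≤ i ≤ n and k·i − j + 1 ≤ l ≤ j − 1 form a ℂ-basis; consequently this quotient has dimension Σ_{i=0}^{n} max(0, 2j − 1 − k·i). (This quotient computes Ext¹_{Z_k^{(n)}}(O(j), O(−j)) via the Čech complex for the two standard charts.) -/
set_option synthInstance.maxHeartbeats 1000000
set_option maxHeartbeats 1000000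

noncomputable section

/-- The ring of Laurent polynomials `ℂ[z,z⁻¹]`. -/
abbrev Lz : Type := LaurentPolynomial ℂ

/-- The ring `P = ℂ[z,z⁻¹][[u]]` of formal power series in `u` with Laurent
polynomial coefficients. -/
abbrev Pz : Type := PowerSeries Lz

/-- The monomial `z^l u^i` as an element of `P`. -/
def mon (l : ℤ) (i : ℕ) : Pz := PowerSeries.monomial i (LaurentPolynomial.T l)

/-- The ideal `(u^{n+1})` of `P`. -/
def In (n : ℕ) : Ideal Pz := Ideal.span {(PowerSeries.X : Pz) ^ (n + 1)}

/-- The ring `A = ℂ[z,z⁻¹][u]/(u^{n+1})`, the coordinate ring of the overlap of the two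
standard charts of the `n`-th infinitesimal neighborhood `Z_k^{(n)}`. -/
abbrev Aq (n : ℕ) : Type := Pz ⧸ In n

/-- The quotient map `P → A`. -/
def toA (n : ℕ) : Pz →+* Aq n := Ideal.Quotient.mk (In n)

/-- The monomial `z^l u^i` as an element of `A`. -/
def monA (n : ℕ) (l : ℤ) (i : ℕ) : Aq n := toA n (mon l i)

/-- `O_U ⊆ A`: the `ℂ`-span of the monomials `z^l u^i` with `l ≥ 0`, `0 ≤ i ≤ n`. -/
def OU (n : ℕ) : Submodule ℂ (Aq n) :=
  Submodule.span ℂ {x | ∃ l : ℤ, ∃ i : ℕ, 0 ≤ l ∧ i ≤ n ∧ x = monA n l i}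

/-- `O_V ⊆ A`: the `ℂ`-span of the monomials `z^l u^i` with `l ≤ k·i`, `0 ≤ i ≤ n`. -/
def OV (k n : ℕ) : Submodule ℂ (Aq n) :=
  Submodule.span ℂ {x | ∃ l : ℤ, ∃ i : ℕ, l ≤ k * i ∧ i ≤ n ∧ x = monA n l i}

/-- The submodule `a·S` obtained from a submodule `S` by multiplying by a fixed element `a`. -/
def msmul {n : ℕ} (a : Aq n) (S : Submodule ℂ (Aq n)) : Submodule ℂ (Aq n) :=
  Submodule.map (LinearMap.mulLeft ℂ a) S

/-!
Multiplication by a power of `z` permutes the monomials `z^l u^i`, which form a `ℂ`-basis of `A`.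
Hence `z^a·O_U` and `z^{−b}·O_V` are both spanned by subsets of this basis, namely by the monomials
with `l ≥ a` and with `l ≤ k·i − b`; the monomials in neither subset therefore give a basis of the
quotient by the sum of the two spaces.
-/

section QuotientBySpan

variable {R M ι : Type*} [Ring R] [AddCommGroup M] [Module R M] {v : ι → M} {s t : Set ι}

lemma span_mkQ_image_eq_top (h : Submodule.span R (v '' (s ∪ t)) = ⊤) :
    Submodule.span R ((Submodule.span R (v '' s)).mkQ ∘ v '' t) = ⊤ := by
  rw [Set.image_comp, Submodule.span_image, Submodule.map_mkQ_eq_top, ← Submodule.span_union,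
    ← Set.image_union, h]

end QuotientBySpan

lemma natCard_fiberwise_Icc (n : ℕ) (lo hi : ℕ → ℤ) :
    (Nat.card {q : ℤ × ℕ // q.2 ≤ n ∧ lo q.2 ≤ q.1 ∧ q.1 ≤ hi q.2} : ℤ) =
      ∑ i ∈ Finset.range (n + 1), max 0 (hi i + 1 - lo i) := by
  let e : {q : ℤ × ℕ // q.2 ≤ n ∧ lo q.2 ≤ q.1 ∧ q.1 ≤ hi q.2} ≃
      (Finset.range (n + 1)).sigma fun i => Finset.Icc (lo i) (hi i) :=
    ((Equiv.prodComm ℤ ℕ).trans (Equiv.sigmaEquivProd ℕ ℤ).symm).subtypeEquiv fun q => by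
      simp
  rw [Nat.card_congr e, Nat.card_eq_fintype_card, Fintype.card_coe, Finset.card_sigma]
  push_cast
  simp only [Int.card_Icc, Int.ofNat_toNat, max_comm]

section Monomials

variable {n : ℕ}

/-- The exponents `(l, i)` of the monomials `z^l u^i` that are nonzero in `A`. -/
def monomialIndex (n : ℕ) : Set (ℤ × ℕ) := {q | q.2 ≤ n}

/-- The monomials of `A` as a family indexed by exponent pairs `(l, i)`, in the order of `monA`:
the exponent of `z` comes first. -/
def monFamily (n : ℕ) (q : ℤ × ℕ) : Aq n := monA n q.1 q.2

lemma monA_mul_monA (l l' : ℤ) (i i' : ℕ) :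
    monA n l i * monA n l' i' = monA n (l + l') (i + i') := by
  simp only [monA, mon, ← map_mul, PowerSeries.monomial_mul_monomial, LaurentPolynomial.T_add]

/-- The functional on `ℂ[z,z⁻¹][[u]]` reading off the coefficient of `z^l u^i`, `q = (l, i)`. -/
def seriesCoeff (q : ℤ × ℕ) : Module.Dual ℂ Pz :=
  (AddMonoidAlgebra.basis ℤ ℂ).coord q.1 ∘ₗ (PowerSeries.coeff q.2).restrictScalars ℂ

lemma seriesCoeff_mon (q : ℤ × ℕ) (l : ℤ) (i : ℕ) :
    seriesCoeff q (mon l i) = if (l, i) = q then 1 else 0 := by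
  obtain ⟨m, d⟩ := q
  change (PowerSeries.coeff d (mon l i)).coeff m = _
  rcases eq_or_ne d i with rfl | hdi
  · rw [mon, PowerSeries.coeff_monomial_same, LaurentPolynomial.T_apply]
    simp only [Prod.mk.injEq, and_true]
  · rw [mon, PowerSeries.coeff_monomial, if_neg hdi, if_neg (by simp [hdi.symm])]
    rfl

lemma seriesCoeff_eq_zero_of_mem_In {q : ℤ × ℕ} (hq : q ∈ monomialIndex n) {p : Pz}
    (hp : p ∈ In n) : seriesCoeff q p = 0 := by
  have hcoeff : PowerSeries.coeff q.2 p = 0 :=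
    PowerSeries.X_pow_dvd_iff.1 (Ideal.mem_span_singleton.1 hp) q.2 (Nat.lt_succ_of_le hq)
  simp [seriesCoeff, hcoeff]

/-- The functional on `A` induced by `seriesCoeff q`, for an exponent `q` below the truncation. -/
def monCoeff (q : monomialIndex n) : Module.Dual ℂ (Aq n) :=
  ((In n).restrictScalars ℂ).liftQ (seriesCoeff q)
      (fun _ hp => seriesCoeff_eq_zero_of_mem_In q.2 hp) ∘ₗ
    (Submodule.Quotient.restrictScalarsEquiv ℂ (In n)).symm.toLinearMap

lemma monCoeff_monFamily (q : monomialIndex n) (r : ℤ × ℕ) :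
    monCoeff q (monFamily n r) = if r = q then 1 else 0 :=
  seriesCoeff_mon q r.1 r.2

lemma linearIndepOn_monFamily (n : ℕ) : LinearIndepOn ℂ (monFamily n) (monomialIndex n) := by
  refine LinearIndependent.of_pairwise_dual_eq_zero_one _ monCoeff ?_ ?_
  · intro q r hqr
    rw [monCoeff_monFamily, if_neg (Subtype.coe_ne_coe.2 hqr.symm)]
  · intro q
    rw [monCoeff_monFamily, if_pos rfl]

lemma toA_eq_sum_coeff (p : Pz) :
    toA n p =
      ∑ i ∈ Finset.range (n + 1), toA n (PowerSeries.monomial i (PowerSeries.coeff i p)) := by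
  rw [← map_sum, toA, Ideal.Quotient.eq, In, Ideal.mem_span_singleton, PowerSeries.X_pow_dvd_iff]
  intro m hm
  simp [PowerSeries.coeff_monomial, hm]

lemma toA_monomial_mem_span_monFamily {i : ℕ} (hi : i ≤ n) (f : Lz) :
    toA n (PowerSeries.monomial i f) ∈
      Submodule.span ℂ (monFamily n '' monomialIndex n) := by
  induction f using LaurentPolynomial.induction_on' with
  | add f g hf hg => simpa only [map_add] using add_mem hf hg
  | C_mul_T l c =>
    have hsmul : toA n (PowerSeries.monomial i (LaurentPolynomial.C c * LaurentPolynomial.T l)) =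
        c • monFamily n (l, i) := by
      rw [← LaurentPolynomial.smul_eq_C_mul, LinearMap.map_smul_of_tower]
      rfl
    rw [hsmul]
    exact Submodule.smul_mem _ c (Submodule.subset_span ⟨(l, i), hi, rfl⟩)

lemma span_monFamily_eq_top (n : ℕ) :
    Submodule.span ℂ (monFamily n '' monomialIndex n) = ⊤ := by
  rw [eq_top_iff]
  rintro a -
  obtain ⟨p, rfl⟩ : ∃ p, toA n p = a := Ideal.Quotient.mk_surjective a
  rw [toA_eq_sum_coeff]
  exact sum_mem fun i hi =>
    toA_monomial_mem_span_monFamily (Finset.mem_range_succ_iff.1 hi) _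

lemma msmul_monA_span_monFamily (a : ℤ) (s : Set (ℤ × ℕ)) :
    msmul (monA n a 0) (Submodule.span ℂ (monFamily n '' s)) =
      Submodule.span ℂ (monFamily n '' {q | (q.1 - a, q.2) ∈ s}) := by
  rw [msmul, Submodule.map_span, Set.image_image]
  simp only [monFamily, LinearMap.mulLeft_apply, monA_mul_monA, zero_add]
  congr 1
  ext x
  constructor
  · rintro ⟨q, hq, rfl⟩
    exact ⟨(a + q.1, q.2), by simpa using hq, rfl⟩
  · rintro ⟨q, hq, rfl⟩
    exact ⟨(q.1 - a, q.2), hq, congrArg (monA n · q.2) (add_sub_cancel a q.1)⟩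

end Monomials

section CechCoboundaries

variable (k n : ℕ) (a b : ℤ)

/-- The space `z^a·O_U + z^{−b}·O_V` of Čech coboundaries: the cokernel of its inclusion into `A`
is `Ext¹(O(a), O(-b))` on `Z_k^{(n)}`. -/
def cechCoboundaries : Submodule ℂ (Aq n) :=
  msmul (monA n a 0) (OU n) ⊔ msmul (monA n (-b) 0) (OV k n)

/-- The exponents `(l, i)` of the nonzero monomials `z^l u^i` in `z^a·O_U` or in `z^{−b}·O_V`. -/
def coboundaryIndex : Set (ℤ × ℕ) := {q | q.2 ≤ n ∧ (a ≤ q.1 ∨ q.1 ≤ (k : ℤ) * q.2 - b)}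

/-- The exponents `(l, i)` of the nonzero monomials `z^l u^i` in neither `z^{−b}·O_V` nor
`z^a·O_U`. -/
def gapIndex : Set (ℤ × ℕ) := {q | q.2 ≤ n ∧ (k : ℤ) * q.2 - b + 1 ≤ q.1 ∧ q.1 ≤ a - 1}

lemma coboundaryIndex_union_gapIndex :
    coboundaryIndex k n a b ∪ gapIndex k n a b = monomialIndex n := by
  ext q
  simp only [coboundaryIndex, gapIndex, monomialIndex, Set.mem_union, Set.mem_ofPred_eq]
  omega

lemma disjoint_coboundaryIndex_gapIndex :
    Disjoint (coboundaryIndex k n a b) (gapIndex k n a b) := by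
  rw [Set.disjoint_left]
  simp only [coboundaryIndex, gapIndex, Set.mem_ofPred_eq]
  omega

lemma OU_eq_span_monFamily :
    OU n = Submodule.span ℂ (monFamily n '' {q | 0 ≤ q.1 ∧ q.2 ≤ n}) := by
  rw [OU]
  congr 1
  ext x
  simp [monFamily, and_assoc, eq_comm]

lemma OV_eq_span_monFamily :
    OV k n = Submodule.span ℂ (monFamily n '' {q | q.1 ≤ (k : ℤ) * q.2 ∧ q.2 ≤ n}) := by
  rw [OV]
  congr 1
  ext x
  simp [monFamily, and_assoc, eq_comm]

lemma cechCoboundaries_eq_span :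
    cechCoboundaries k n a b = Submodule.span ℂ (monFamily n '' coboundaryIndex k n a b) := by
  rw [cechCoboundaries, OU_eq_span_monFamily, OV_eq_span_monFamily, msmul_monA_span_monFamily,
    msmul_monA_span_monFamily, ← Submodule.span_union, ← Set.image_union]
  congr 2
  ext q
  simp only [coboundaryIndex, Set.mem_union, Set.mem_ofPred_eq]
  omega

lemma linearIndepOn_mkQ_monFamily :
    LinearIndepOn ℂ ((cechCoboundaries k n a b).mkQ ∘ monFamily n) (gapIndex k n a b) := by
  have hmon := linearIndepOn_monFamily n
  rw [← coboundaryIndex_union_gapIndex k n a b] at hmon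
  rw [cechCoboundaries_eq_span]
  exact (LinearIndepOn.quotient_iff_union (hmon.mono Set.subset_union_left)
    (disjoint_coboundaryIndex_gapIndex k n a b)).2 hmon

lemma span_mkQ_monFamily_eq_top :
    Submodule.span ℂ ((cechCoboundaries k n a b).mkQ ∘ monFamily n '' gapIndex k n a b) = ⊤ := by
  rw [cechCoboundaries_eq_span]
  apply span_mkQ_image_eq_top
  rw [coboundaryIndex_union_gapIndex, span_monFamily_eq_top]

lemma natCard_gapIndex :
    (Nat.card (gapIndex k n a b) : ℤ) =
      ∑ i ∈ Finset.range (n + 1), max 0 (a + b - 1 - (k : ℤ) * i) := by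
  refine (natCard_fiberwise_Icc n (fun i => (k : ℤ) * i - b + 1) fun _ => a - 1).trans ?_
  refine Finset.sum_congr rfl fun i _ => ?_
  congr 1
  ring

theorem statement2_general :
    LinearIndependent ℂ
      (fun q : gapIndex k n a b =>
        Submodule.Quotient.mk (p := cechCoboundaries k n a b) (monA n q.1.1 q.1.2)) ∧
    Submodule.span ℂ
      (Set.range
        (fun q : gapIndex k n a b =>
          Submodule.Quotient.mk (p := cechCoboundaries k n a b) (monA n q.1.1 q.1.2))) = ⊤ ∧
    (Module.finrank ℂ (Aq n ⧸ cechCoboundaries k n a b) : ℤ) =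
      ∑ i ∈ Finset.range (n + 1), max 0 (a + b - 1 - (k : ℤ) * i) := by
  have hindep := linearIndepOn_mkQ_monFamily k n a b
  have hspan := span_mkQ_monFamily_eq_top k n a b
  rw [Set.image_eq_range] at hspan
  refine ⟨hindep, hspan, ?_⟩
  rw [Module.finrank_eq_nat_card_basis (Module.Basis.mk hindep hspan.ge), natCard_gapIndex]

end CechCoboundaries

/-- for `j ≥ 1`, in the quotient `A/(z^j·O_U + z^{−j}·O_V)` the images of the
monomials `z^l u^i` with `0 ≤ i ≤ n` and `k·i − j + 1 ≤ l ≤ j − 1` form a `ℂ`-basis, and the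
quotient has dimension `Σ_{i=0}^{n} max(0, 2j − 1 − k·i)`. -/
theorem statement2 (k n : ℕ) (hk : 1 ≤ k) (hn : 1 ≤ n) (j : ℤ) (hj : 1 ≤ j)
    (S : Submodule ℂ (Aq n))
    (hS : S = msmul (monA n j 0) (OU n) ⊔ msmul (monA n (-j) 0) (OV k n)) :
    LinearIndependent ℂ
      (fun q : {q : ℤ × ℕ // q.2 ≤ n ∧ (k : ℤ) * q.2 - j + 1 ≤ q.1 ∧ q.1 ≤ j - 1} =>
        Submodule.Quotient.mk (p := S) (monA n q.1.1 q.1.2)) ∧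
    Submodule.span ℂ
      (Set.range
        (fun q : {q : ℤ × ℕ // q.2 ≤ n ∧ (k : ℤ) * q.2 - j + 1 ≤ q.1 ∧ q.1 ≤ j - 1} =>
          Submodule.Quotient.mk (p := S) (monA n q.1.1 q.1.2))) = ⊤ ∧
    (Module.finrank ℂ (Aq n ⧸ S) : ℤ) =
      ∑ i ∈ Finset.range (n + 1), max 0 (2 * j - 1 - (k : ℤ) * i) := by
  subst hS
  rw [two_mul]
  exact statement2_general k n j j
end
end

section
/- Take n = 1 (so A = ℂ[z,z⁻¹][u]/(u²)) and fix an integer j ≥ 1, and let R ⊆ A be the ℂ-span of the monomials z^l·u with k − j + 1 ≤ l ≤ j − 1. For all p, p′ ∈ R, the bundles E_p and E_{p′} on the first infinitesimal neighborhood Z_k^{(1)} are isomorphic (i.e. E_p ≅ E_{p′}) if and only if there exists λ ∈ ℂ with λ ≠ 0 such that p′ = λ·p. -/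
set_option synthInstance.maxHeartbeats 1000000
set_option maxHeartbeats 1000000

noncomputable section

/-- `R ⊆ A`: the `ℂ`-span of the monomials `z^l u^i` with `1 ≤ i ≤ n` and
`k·i − j + 1 ≤ l ≤ j − 1` (the space of normal forms of extension classes). -/
def Rmod (k n : ℕ) (j : ℤ) : Submodule ℂ (Aq n) :=
  Submodule.span ℂ
    {x | ∃ l : ℤ, ∃ i : ℕ, 1 ≤ i ∧ i ≤ n ∧ (k : ℤ) * i - j + 1 ≤ l ∧ l ≤ j - 1 ∧ x = monA n l i}

/-- The transition matrix `M_p = ((z^j, p),(0, z^{−j}))` of the bundle `E_p`. -/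
def Mmat (n : ℕ) (j : ℤ) (p : Aq n) : Matrix (Fin 2) (Fin 2) (Aq n) :=
  !![monA n j 0, p; 0, monA n (-j) 0]

/-- `E_p ≅ E_{p′}`: there are matrices `A₁` with entries in `O_U` and `B₁` with entries
in `O_V`, with `det A₁` a unit of `O_U` and `det B₁` a unit of `O_V`, with
`B₁ · M_p = M_{p′} · A₁`. -/
def BundleIso (k n : ℕ) (j : ℤ) (p p' : Aq n) : Prop :=
  ∃ A₁ B₁ : Matrix (Fin 2) (Fin 2) (Aq n),
    (∀ a b : Fin 2, A₁ a b ∈ OU n) ∧ (∀ a b : Fin 2, B₁ a b ∈ OV k n) ∧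
    (∃ w ∈ OU n, A₁.det * w = 1) ∧ (∃ w ∈ OV k n, B₁.det * w = 1) ∧
    B₁ * Mmat n j p = Mmat n j p' * A₁

/-!
Modulo `u` the isomorphism is an automorphism of `O(-j) ⊕ O(j)` on `ℙ¹`. Since `O(-2j)` has no
nonzero global sections, it is triangular with nonzero constants `a`, `d` on the diagonal. The
upper right entry of `B₁ M_p = M_{p'} A₁` then reads, to first order in `u`,
`a p + z^{-j} b = z^j c + d p'`. The exponents of `z^j c` are at least `j` and those of `z^{-j} b`
are at most `k - j`, so neither meets the window `k - j < l < j` supporting `p` and `p'`, and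
`a p = d p'`.
-/

open LaurentPolynomial Matrix

section LaurentPolynomial

variable {R : Type*} [Semiring R]

theorem coeff_T_mul (m l : ℤ) (f : R[T;T⁻¹]) : (T m * f).coeff l = f.coeff (l - m) := by
  have h := AddMonoidAlgebra.coeff_single_mul_add f 1 m (l - m)
  rwa [add_sub_cancel, one_mul] at h

theorem eq_C_coeff_zero {f : R[T;T⁻¹]} (hneg : ∀ l < 0, f.coeff l = 0)
    (hpos : ∀ l > 0, f.coeff l = 0) : f = C (f.coeff 0) := by
  ext l
  rw [C_apply]
  rcases lt_trichotomy l 0 with hl | rfl | hl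
  · rw [hneg l hl, if_neg hl.ne]
  · rw [if_pos rfl]
  · rw [hpos l hl, if_neg hl.ne']

/-- The entries of `A` are regular at `z = 0` and those of `B` at `z = ∞`, so the equation `h`
makes `(A, B)` an endomorphism of the bundle `O(-j) ⊕ O(j)` on `ℙ¹`. -/
theorem entries_of_mul_diagonal_T_eq {j : ℤ} (hj : 1 ≤ j)
    {A B : Matrix (Fin 2) (Fin 2) R[T;T⁻¹]}
    (hA : ∀ r s, ∀ l < 0, (A r s).coeff l = 0) (hB : ∀ r s, ∀ l > 0, (B r s).coeff l = 0)
    (h : B * diagonal ![T j, T (-j)] = diagonal ![T j, T (-j)] * A) :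
    A 0 1 = 0 ∧ ∃ a d, A 0 0 = C a ∧ B 0 0 = C a ∧ A 1 1 = C d := by
  have entry (r s) : T (![j, -j] s) * B r s = T (![j, -j] r) * A r s := by
    have hrs := congr_fun₂ h r s
    rw [mul_diagonal, diagonal_mul] at hrs
    fin_cases r <;> fin_cases s <;> exact (T_mul _ _).trans hrs
  have diag (r) : B r r = A r r := (isUnit_T _).mul_left_cancel (entry r r)
  have diag_const (r) : A r r = C ((A r r).coeff 0) :=
    eq_C_coeff_zero (hA r r) fun l hl ↦ diag r ▸ hB r r l hl
  refine ⟨?_, _, _, diag_const 0, (diag 0).trans (diag_const 0), diag_const 1⟩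
  ext l
  rcases lt_or_ge l 0 with hl | hl
  · exact hA 0 1 l hl
  · have h01 := congrArg (fun f ↦ f.coeff (l + j)) (entry 0 1)
    simp only [cons_val_zero, cons_val_one, coeff_T_mul, add_sub_cancel_right] at h01
    exact h01.symm.trans (hB 0 1 _ (by omega))

theorem smul_eq_smul_of_add_T_mul_eq {k j : ℤ} {a d : R} {q q' b c : R[T;T⁻¹]}
    (hq : ∀ l, ¬(k - j < l ∧ l < j) → q.coeff l = 0)
    (hq' : ∀ l, ¬(k - j < l ∧ l < j) → q'.coeff l = 0)
    (hb : ∀ l > k, b.coeff l = 0) (hc : ∀ l < 0, c.coeff l = 0)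
    (h : a • q + T (-j) * b = T j * c + d • q') : a • q = d • q' := by
  ext l
  by_cases hl : k - j < l ∧ l < j
  · have hcoeff := congrArg (fun f ↦ f.coeff l) h
    simp only [AddMonoidAlgebra.coeff_add, Finsupp.add_apply, coeff_T_mul] at hcoeff
    rwa [hb _ (by omega), hc _ (by omega), add_zero, zero_add] at hcoeff
  · simp only [AddMonoidAlgebra.coeff_smul, Finsupp.smul_apply, hq l hl, hq' l hl, smul_zero]

theorem coeff_map_eq_zero_of_mem_span {M : Type*} [AddCommMonoid M] [Module R M]
    (φ : M →ₗ[R] R[T;T⁻¹]) {S : Set M} {x : M} {l : ℤ} (hx : x ∈ Submodule.span R S)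
    (hS : ∀ y ∈ S, (φ y).coeff l = 0) : (φ x).coeff l = 0 := by
  induction hx using Submodule.span_induction with
  | mem y hy => exact hS y hy
  | zero => rw [map_zero, AddMonoidAlgebra.coeff_zero, Finsupp.zero_apply]
  | add y z _ _ hy hz =>
    rw [map_add, AddMonoidAlgebra.coeff_add, Finsupp.add_apply, hy, hz, add_zero]
  | smul r y _ hy =>
    rw [map_smul, AddMonoidAlgebra.coeff_smul, Finsupp.smul_apply, hy, smul_zero]

end LaurentPolynomial

/-- Reduction of a power series modulo the square of the variable, as a dual number. -/
def truncDual (R : Type*) [CommSemiring R] : PowerSeries R →ₐ[R] DualNumber R where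
  toFun f := .inl (PowerSeries.coeff 0 f) + .inr (PowerSeries.coeff 1 f)
  map_zero' := by simp
  map_add' _ _ := by ext <;> simp
  map_one' := by ext <;> simp [PowerSeries.coeff_one]
  map_mul' _ _ := by ext <;> simp [PowerSeries.coeff_one_mul, mul_comm, add_comm]
  commutes' _ := by ext <;> simp [TrivSqZeroExt.algebraMap_eq_inl, PowerSeries.coeff_C]

theorem fst_truncDual {R : Type*} [CommSemiring R] (f : PowerSeries R) :
    (truncDual R f).fst = PowerSeries.coeff 0 f := by
  simp [truncDual]

theorem snd_truncDual {R : Type*} [CommSemiring R] (f : PowerSeries R) :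
    (truncDual R f).snd = PowerSeries.coeff 1 f := by
  simp [truncDual]

section FirstOrder

variable {n : ℕ} (hn : 1 ≤ n)

/-- Restriction of functions to the first infinitesimal neighborhood: `f + g u + O(u²)` is sent
to the dual number `f + g ε` over `ℂ[z,z⁻¹]`. -/
def firstOrder : Aq n →ₐ[ℂ] DualNumber Lz :=
  Ideal.Quotient.liftₐ (In n) ((truncDual Lz).restrictScalars ℂ) fun f hf ↦ by
    rw [In, Ideal.mem_span_singleton, PowerSeries.X_pow_dvd_iff] at hf
    exact TrivSqZeroExt.ext ((fst_truncDual f).trans (hf 0 (by omega)))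
      ((snd_truncDual f).trans (hf 1 (by omega)))

/-- Restriction of functions to the zero section `u = 0`. -/
def restrictZeroSection : Aq n →ₐ[ℂ] Lz :=
  (TrivSqZeroExt.fstHom ℂ Lz Lz).comp (firstOrder hn)

theorem fst_firstOrder_monA (l : ℤ) (i : ℕ) :
    (firstOrder hn (monA n l i)).fst = if 0 = i then T l else 0 :=
  (fst_truncDual _).trans (PowerSeries.coeff_monomial 0 i (T l))

theorem snd_firstOrder_monA (l : ℤ) (i : ℕ) :
    (firstOrder hn (monA n l i)).snd = if 1 = i then T l else 0 :=
  (snd_truncDual _).trans (PowerSeries.coeff_monomial 1 i (T l))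

theorem firstOrder_injective : Function.Injective (firstOrder le_rfl) := by
  rw [injective_iff_map_eq_zero]
  intro x hx
  obtain ⟨f, rfl⟩ := Ideal.Quotient.mk_surjective x
  rw [Ideal.Quotient.eq_zero_iff_mem, In, Ideal.mem_span_singleton, PowerSeries.X_pow_dvd_iff]
  intro i hi
  interval_cases i
  · exact (fst_truncDual f).symm.trans (congrArg TrivSqZeroExt.fst hx)
  · exact (snd_truncDual f).symm.trans (congrArg TrivSqZeroExt.snd hx)

theorem mapMatrix_restrictZeroSection_Mmat {j : ℤ} {p : Aq n} (hp : (firstOrder hn p).fst = 0) :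
    (restrictZeroSection hn).mapMatrix (Mmat n j p) = diagonal ![T j, T (-j)] := by
  ext1 r s
  fin_cases r <;> fin_cases s <;> simp [restrictZeroSection, Mmat, hp, fst_firstOrder_monA]

variable {S : Set (Aq n)} {x : Aq n} {l : ℤ}

theorem coeff_fst_firstOrder_of_mem_span
    (hx : x ∈ Submodule.span ℂ S) (hS : ∀ y ∈ S, ∃ m i, y = monA n m i ∧ ¬(m = l ∧ i = 0)) :
    (firstOrder hn x).fst.coeff l = 0 := by
  refine coeff_map_eq_zero_of_mem_span (restrictZeroSection hn).toLinearMap hx fun y hy ↦ ?_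
  obtain ⟨m, i, rfl, hmi⟩ := hS y hy
  change (firstOrder hn (monA n m i)).fst.coeff l = 0
  rw [fst_firstOrder_monA]
  split_ifs with hi
  · exact (T_apply l m).trans (if_neg fun hm ↦ hmi ⟨hm, hi.symm⟩)
  · rfl

theorem coeff_snd_firstOrder_of_mem_span
    (hx : x ∈ Submodule.span ℂ S) (hS : ∀ y ∈ S, ∃ m i, y = monA n m i ∧ ¬(m = l ∧ i = 1)) :
    (firstOrder hn x).snd.coeff l = 0 := by
  refine coeff_map_eq_zero_of_mem_span
    ((TrivSqZeroExt.sndHom Lz Lz).restrictScalars ℂ ∘ₗ (firstOrder hn).toLinearMap) hx fun y hy ↦ ?_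
  obtain ⟨m, i, rfl, hmi⟩ := hS y hy
  change (firstOrder hn (monA n m i)).snd.coeff l = 0
  rw [snd_firstOrder_monA]
  split_ifs with hi
  · exact (T_apply l m).trans (if_neg fun hm ↦ hmi ⟨hm, hi.symm⟩)
  · rfl

variable {k : ℕ} {j : ℤ}

theorem coeff_fst_firstOrder_of_mem_OU (hx : x ∈ OU n) (hl : l < 0) :
    (firstOrder hn x).fst.coeff l = 0 :=
  coeff_fst_firstOrder_of_mem_span hn hx
    fun _ ⟨m, i, hm, _, hy⟩ ↦ ⟨m, i, hy, by omega⟩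

theorem coeff_snd_firstOrder_of_mem_OU (hx : x ∈ OU n) (hl : l < 0) :
    (firstOrder hn x).snd.coeff l = 0 :=
  coeff_snd_firstOrder_of_mem_span hn hx
    fun _ ⟨m, i, hm, _, hy⟩ ↦ ⟨m, i, hy, by omega⟩

theorem coeff_fst_firstOrder_of_mem_OV (hx : x ∈ OV k n) (hl : 0 < l) :
    (firstOrder hn x).fst.coeff l = 0 :=
  coeff_fst_firstOrder_of_mem_span hn hx
    fun _ ⟨m, i, hm, _, hy⟩ ↦ ⟨m, i, hy, by rintro ⟨rfl, rfl⟩; push_cast at hm; omega⟩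

theorem coeff_snd_firstOrder_of_mem_OV (hx : x ∈ OV k n) (hl : k < l) :
    (firstOrder hn x).snd.coeff l = 0 :=
  coeff_snd_firstOrder_of_mem_span hn hx
    fun _ ⟨m, i, hm, _, hy⟩ ↦ ⟨m, i, hy, by rintro ⟨rfl, rfl⟩; push_cast at hm; omega⟩

theorem fst_firstOrder_of_mem_Rmod (hx : x ∈ Rmod k n j) : (firstOrder hn x).fst = 0 :=
  LaurentPolynomial.ext fun _ ↦ coeff_fst_firstOrder_of_mem_span hn hx
    fun _ ⟨m, i, hi, _, _, _, hy⟩ ↦ ⟨m, i, hy, by omega⟩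

theorem coeff_snd_firstOrder_of_mem_Rmod (hx : x ∈ Rmod k n j) (hl : ¬(k - j < l ∧ l < j)) :
    (firstOrder hn x).snd.coeff l = 0 :=
  coeff_snd_firstOrder_of_mem_span hn hx
    fun _ ⟨m, i, _, _, hm, hm', hy⟩ ↦
      ⟨m, i, hy, by rintro ⟨rfl, rfl⟩; push_cast at hm; omega⟩

end FirstOrder

theorem monA_zero_zero (n : ℕ) : monA n 0 0 = 1 := by
  rw [monA, mon, T_zero, PowerSeries.monomial_zero_eq_C_apply, map_one, map_one]

theorem one_mem_OU (n : ℕ) : (1 : Aq n) ∈ OU n :=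
  Submodule.subset_span ⟨0, 0, le_rfl, n.zero_le, (monA_zero_zero n).symm⟩

theorem one_mem_OV (k n : ℕ) : (1 : Aq n) ∈ OV k n :=
  Submodule.subset_span ⟨0, 0, by simp, n.zero_le, (monA_zero_zero n).symm⟩

theorem exists_const_diagonal_of_mul_Mmat_eq {k n : ℕ} {j : ℤ} {p p' : Aq n}
    (hn : 1 ≤ n) (hj : 1 ≤ j) (hp : (firstOrder hn p).fst = 0) (hp' : (firstOrder hn p').fst = 0)
    {A B : Matrix (Fin 2) (Fin 2) (Aq n)} (hA : ∀ r s, A r s ∈ OU n) (hB : ∀ r s, B r s ∈ OV k n)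
    (hdet : IsUnit A.det) (hAB : B * Mmat n j p = Mmat n j p' * A) :
    ∃ a d : ℂ, a ≠ 0 ∧ d ≠ 0 ∧
      (firstOrder hn (B 0 0)).fst = C a ∧ (firstOrder hn (A 1 1)).fst = C d := by
  let A₀ := (restrictZeroSection hn).mapMatrix A
  let B₀ := (restrictZeroSection hn).mapMatrix B
  have order_zero : B₀ * diagonal ![T j, T (-j)] = diagonal ![T j, T (-j)] * A₀ := by
    have hmap := congrArg (restrictZeroSection hn).mapMatrix hAB
    rwa [map_mul, map_mul, mapMatrix_restrictZeroSection_Mmat hn hp,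
      mapMatrix_restrictZeroSection_Mmat hn hp'] at hmap
  obtain ⟨hA01, a, d, hA00, hB00, hA11⟩ := entries_of_mul_diagonal_T_eq hj
    (A := A₀) (B := B₀) (fun r s _ ↦ coeff_fst_firstOrder_of_mem_OU hn (hA r s))
    (fun r s _ ↦ coeff_fst_firstOrder_of_mem_OV hn (hB r s)) order_zero
  have det_A₀ : A₀.det = C (a * d) := by
    rw [det_fin_two, hA01, hA00, hA11, zero_mul, sub_zero, map_mul]
  have had : a * d ≠ 0 := by
    have det_isUnit : IsUnit A₀.det := AlgHom.map_det (restrictZeroSection hn) A ▸ hdet.map _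
    intro had
    exact det_isUnit.ne_zero (by rw [det_A₀, had, map_zero])
  exact ⟨a, d, left_ne_zero_of_mul had, right_ne_zero_of_mul had, hB00, hA11⟩

namespace BundleIso

variable {k n : ℕ} {j : ℤ} {p p' : Aq n}

theorem smul_right {c : ℂ} (hc : c ≠ 0) : BundleIso k n j p (c • p) := by
  let D : Matrix (Fin 2) (Fin 2) (Aq n) := diagonal ![c • 1, 1]
  have D_mem {S : Submodule ℂ (Aq n)} (hS : 1 ∈ S) (r s) : D r s ∈ S := by
    fin_cases r <;> fin_cases s
    exacts [S.smul_mem c hS, S.zero_mem, S.zero_mem, hS]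
  have det_D : D.det * (c⁻¹ • 1) = 1 := by
    simp [D, det_diagonal, smul_smul, inv_mul_cancel₀ hc]
  refine ⟨D, D, D_mem (one_mem_OU n), D_mem (one_mem_OV k n),
    ⟨c⁻¹ • 1, Submodule.smul_mem _ _ (one_mem_OU n), det_D⟩,
    ⟨c⁻¹ • 1, Submodule.smul_mem _ _ (one_mem_OV k n), det_D⟩, ?_⟩
  ext r s
  fin_cases r <;> fin_cases s <;> simp [D, Mmat]

theorem exists_first_order_relation (hn : 1 ≤ n) (hj : 1 ≤ j)
    (hp : (firstOrder hn p).fst = 0) (hp' : (firstOrder hn p').fst = 0)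
    (h : BundleIso k n j p p') :
    ∃ a d : ℂ, a ≠ 0 ∧ d ≠ 0 ∧ ∃ b ∈ OV k n, ∃ c ∈ OU n,
      a • (firstOrder hn p).snd + T (-j) * (firstOrder hn b).snd =
        T j * (firstOrder hn c).snd + d • (firstOrder hn p').snd := by
  obtain ⟨A, B, hA, hB, ⟨w, -, hdet⟩, -, hAB⟩ := h
  obtain ⟨a, d, ha, hd, hB00, hA11⟩ :=
    exists_const_diagonal_of_mul_Mmat_eq hn hj hp hp' hA hB (.of_mul_eq_one w hdet) hAB
  refine ⟨a, d, ha, hd, B 0 1, hB 0 1, A 0 1, hA 0 1, ?_⟩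
  have upper_right : B 0 0 * p + B 0 1 * monA n (-j) 0 = monA n j 0 * A 0 1 + p' * A 1 1 := by
    simpa [Mmat, mul_apply, Fin.sum_univ_two] using congr_fun₂ hAB 0 1
  have first_order := congrArg (fun x ↦ (firstOrder hn x).snd) upper_right
  simp only [map_add, map_mul, TrivSqZeroExt.snd_add, DualNumber.snd_mul, fst_firstOrder_monA,
    snd_firstOrder_monA, hp, hp', hB00, hA11, ← smul_eq_C_mul, if_true, one_ne_zero, if_false,
    mul_zero, zero_mul, add_zero, zero_add] at first_order
  rwa [mul_comm _ (T _), mul_comm _ (C d), ← smul_eq_C_mul] at first_order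

theorem exists_firstOrder_eq_smul (hn : 1 ≤ n) (hj : 1 ≤ j)
    (hp : p ∈ Rmod k n j) (hp' : p' ∈ Rmod k n j) (h : BundleIso k n j p p') :
    ∃ c : ℂ, c ≠ 0 ∧ firstOrder hn p' = c • firstOrder hn p := by
  have fst_p := fst_firstOrder_of_mem_Rmod hn hp
  have fst_p' := fst_firstOrder_of_mem_Rmod hn hp'
  obtain ⟨a, d, ha, hd, b, hb, c, hc, hrel⟩ := h.exists_first_order_relation hn hj fst_p fst_p'
  have hsmul := smul_eq_smul_of_add_T_mul_eq (fun _ ↦ coeff_snd_firstOrder_of_mem_Rmod hn hp)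
    (fun _ ↦ coeff_snd_firstOrder_of_mem_Rmod hn hp') (fun _ ↦ coeff_snd_firstOrder_of_mem_OV hn hb)
    (fun _ ↦ coeff_snd_firstOrder_of_mem_OU hn hc) hrel
  refine ⟨d⁻¹ * a, mul_ne_zero (inv_ne_zero hd) ha, TrivSqZeroExt.ext ?_ ?_⟩
  · rw [TrivSqZeroExt.fst_smul, fst_p, fst_p', smul_zero]
  · rw [TrivSqZeroExt.snd_smul, mul_smul, hsmul, inv_smul_smul₀ hd]

end BundleIso

/-- on the first infinitesimal neighborhood (`n = 1`), for `p, p′` in the space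
`R` of normal forms, `E_p ≅ E_{p′}` if and only if `p′ = λ·p` for some nonzero `λ ∈ ℂ`. -/
theorem statement10 (k : ℕ) (hk : 1 ≤ k) (j : ℤ) (hj : 1 ≤ j)
    (p p' : Aq 1) (hp : p ∈ Rmod k 1 j) (hp' : p' ∈ Rmod k 1 j) :
    BundleIso k 1 j p p' ↔ ∃ lam : ℂ, lam ≠ 0 ∧ p' = lam • p := by
  constructor
  · intro h
    obtain ⟨c, hc, hpp'⟩ := h.exists_firstOrder_eq_smul le_rfl hj hp hp'
    exact ⟨c, hc, firstOrder_injective (hpp'.trans (map_smul _ c p).symm)⟩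
  · rintro ⟨c, hc, rfl⟩
    exact BundleIso.smul_right hc
end
end
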